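/- arXiv:2112.11968 — 6 statements merged into one kernel-verified Lean document; each statement's English description precedes it below -/
import Mathlib

section
/- Let C : [0,1]² → [0,1] be twice continuously differentiable with C(u,0) = C(0,v) = 0, C(u,1) = u and C(1,v) = v for all u,v ∈ [0,1], and let c(u,v) = ∂²C/∂u∂v(u,v) ≥ 0 on [0,1]². Let F₁, F₂ : ℝ → ℝ be continuous, strictly increasing bijections onto (0,1) with inverses F₁⁻¹, F₂⁻¹ : (0,1) → ℝ, satisfying ∫₀¹ exp(Fᵢ⁻¹(w)) dw < ∞ for i = 1,2. Let S₁, S₂, K > 0 and define d₁(v) = F₁(ln((S₂·exp(F₂⁻¹(v)) + K)/S₁)) for v ∈ (0,1), d₃ = F₁(ln(K/S₁)), and d₂(u) = F₂(ln((S₁·exp(F₁⁻¹(u)) − K)/S₂)) for u ∈ (d₃,1). Then ∫₀¹∫₀¹ max(S₁·exp(F₁⁻¹(u)) − S₂·exp(F₂⁻¹(v)) − K, 0)·c(u,v) du dv = ∫_{d₃}¹ S₁·exp(F₁⁻¹(u))·∂C/∂u(u, d₂(u)) du − ( ∫₀¹ S₂·exp(F₂⁻¹(v)) dv − ∫₀¹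 S₂·exp(F₂⁻¹(v))·∂C/∂v(d₁(v), v) dv ) − K·(1 − ∫₀¹ ∂C/∂v(d₁(v), v) dv). -/
open Real Set MeasureTheory intervalIntegral

lemma intA (g : ℝ → ℝ) (a : ℝ) (ha : a ∈ Ioo (0:ℝ) 1) :
    ∫ u in Ioo (0:ℝ) 1, (if a < u then g u else 0) = ∫ u in a..1, g u := by
  rw [intervalIntegral.integral_of_le ha.2.le, ← integral_Ioc_eq_integral_Ioo]
  have : (fun u => if a < u then g u else 0) = (Ioi a).indicator g := by
    ext u; simp [indicator]
  rw [this, setIntegral_indicator measurableSet_Ioi, Ioc_inter_Ioi, max_eq_right ha.1.le]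

lemma intB (g : ℝ → ℝ) (b : ℝ) (hb : b ∈ Ioo (0:ℝ) 1) :
    ∫ v in Ioo (0:ℝ) 1, (if v < b then g v else 0) = ∫ v in (0:ℝ)..b, g v := by
  rw [intervalIntegral.integral_of_le hb.1.le, integral_Ioc_eq_integral_Ioo]
  have : (fun u => if u < b then g u else 0) = (Iio b).indicator g := by
    ext u; simp [indicator]
  rw [this, setIntegral_indicator measurableSet_Iio, Ioo_inter_Iio, min_eq_right hb.2.le]

lemma calc_facts (C : ℝ → ℝ → ℝ)
    (hC : ContDiffOn ℝ 2 (fun p : ℝ × ℝ => C p.1 p.2)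
      (Set.Icc (0:ℝ) 1 ×ˢ Set.Icc (0:ℝ) 1))
    (hground_u : ∀ u ∈ Set.Icc (0:ℝ) 1, C u 0 = 0)
    (hmarg_v : ∀ v ∈ Set.Icc (0:ℝ) 1, C 1 v = v) :
    ∃ D1 D2 c' : ℝ × ℝ → ℝ,
      ContinuousOn D1 (Icc (0:ℝ) 1 ×ˢ Icc (0:ℝ) 1) ∧
      ContinuousOn D2 (Icc (0:ℝ) 1 ×ˢ Icc (0:ℝ) 1) ∧
      ContinuousOn c' (Icc (0:ℝ) 1 ×ˢ Icc (0:ℝ) 1) ∧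
      (∀ u ∈ Ioo (0:ℝ) 1, ∀ v ∈ Ioo (0:ℝ) 1,
        deriv (fun x => C x v) u = D1 (u, v) ∧ deriv (fun y => C u y) v = D2 (u, v) ∧
        HasDerivAt (fun x => D2 (x, v)) (c' (u, v)) u ∧
        HasDerivAt (fun y => D1 (u, y)) (c' (u, v)) v) ∧
      (∀ v ∈ Ioo (0:ℝ) 1, D2 (1, v) = 1) ∧ (∀ u ∈ Ioo (0:ℝ) 1, D1 (u, 0) = 0) := by
  set Q : Set (ℝ × ℝ) := Icc (0:ℝ) 1 ×ˢ Icc (0:ℝ) 1 with hQ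
  set f : ℝ × ℝ → ℝ := fun p => C p.1 p.2 with hf
  have hU : UniqueDiffOn ℝ Q := (uniqueDiffOn_Icc zero_lt_one).prod (uniqueDiffOn_Icc zero_lt_one)
  have hF : ContDiffOn ℝ 1 (fderivWithin ℝ f Q) Q := hC.fderivWithin hU (by norm_num)
  have hFF : ContinuousOn (fderivWithin ℝ (fderivWithin ℝ f Q) Q) Q :=
    hF.continuousOn_fderivWithin hU (by norm_num)
  have hnhds : ∀ u ∈ Ioo (0:ℝ) 1, ∀ v ∈ Ioo (0:ℝ) 1, Q ∈ nhds (u, v) := fun u hu v hv =>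
    prod_mem_nhds (Icc_mem_nhds hu.1 hu.2) (Icc_mem_nhds hv.1 hv.2)
  have hfd : ∀ p ∈ Q, HasFDerivWithinAt f (fderivWithin ℝ f Q p) Q p := fun p hp =>
    ((hC.differentiableOn (by norm_num)) p hp).hasFDerivWithinAt
  have hFd : ∀ p ∈ Q, HasFDerivWithinAt (fderivWithin ℝ f Q)
      (fderivWithin ℝ (fderivWithin ℝ f Q) Q p) Q p := fun p hp =>
    ((hF.differentiableOn (by norm_num)) p hp).hasFDerivWithinAt
  have hx : ∀ u v : ℝ, HasDerivAt (fun x : ℝ => (x, v)) ((1:ℝ), (0:ℝ)) u := fun u v =>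
    (hasDerivAt_id u).prodMk (hasDerivAt_const u v)
  have hy : ∀ u v : ℝ, HasDerivAt (fun y : ℝ => (u, y)) ((0:ℝ), (1:ℝ)) v := fun u v =>
    (hasDerivAt_const v u).prodMk (hasDerivAt_id v)
  refine ⟨fun p => fderivWithin ℝ f Q p (1, 0), fun p => fderivWithin ℝ f Q p (0, 1),
    fun p => fderivWithin ℝ (fderivWithin ℝ f Q) Q p (1, 0) (0, 1),
    hF.continuousOn.clm_apply continuousOn_const, hF.continuousOn.clm_apply continuousOn_const,
    (hFF.clm_apply continuousOn_const).clm_apply continuousOn_const, ?_, ?_, ?_⟩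
  · intro u hu v hv
    have hn := hnhds u hu v hv
    have hm : (u, v) ∈ Q := mem_of_mem_nhds hn
    have h1 : HasFDerivAt f (fderivWithin ℝ f Q (u, v)) (u, v) := (hfd _ hm).hasFDerivAt hn
    have h2 := (hFd _ hm).hasFDerivAt hn
    have a1 : HasDerivAt (fun x => C x v) (fderivWithin ℝ f Q (u, v) (1, 0)) u :=
      HasFDerivAt.comp_hasDerivAt u (f := fun x : ℝ => (x, v)) h1 (hx u v)
    have a2 : HasDerivAt (fun y => C u y) (fderivWithin ℝ f Q (u, v) (0, 1)) v :=
      HasFDerivAt.comp_hasDerivAt v (f := fun y : ℝ => (u, y)) h1 (hy u v)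
    have b1 : HasDerivAt (fun x => fderivWithin ℝ f Q (x, v))
        (fderivWithin ℝ (fderivWithin ℝ f Q) Q (u, v) (1, 0)) u :=
      HasFDerivAt.comp_hasDerivAt u (f := fun x : ℝ => (x, v)) h2 (hx u v)
    have b2 : HasDerivAt (fun y => fderivWithin ℝ f Q (u, y))
        (fderivWithin ℝ (fderivWithin ℝ f Q) Q (u, v) (0, 1)) v :=
      HasFDerivAt.comp_hasDerivAt v (f := fun y : ℝ => (u, y)) h2 (hy u v)
    refine ⟨a1.deriv, a2.deriv, ?_, ?_⟩
    · exact (b1.clm_apply (hasDerivAt_const u ((0:ℝ),(1:ℝ)))).congr_deriv (by simp)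
    · have hs : fderivWithin ℝ (fderivWithin ℝ f Q) Q (u, v) (1, 0) (0, 1)
          = fderivWithin ℝ (fderivWithin ℝ f Q) Q (u, v) (0, 1) (1, 0) := by
        have hsym : IsSymmSndFDerivWithinAt ℝ f Q (u, v) := by
          apply (hC _ hm).isSymmSndFDerivWithinAt (by simp) hU _ hm
          rw [mem_closure_iff_nhds] 
          intro t ht
          refine ⟨(u,v), mem_of_mem_nhds ht, ?_⟩
          exact mem_interior_iff_mem_nhds.2 hn
        exact hsym _ _
      exact (b2.clm_apply (hasDerivAt_const v ((1:ℝ),(0:ℝ)))).congr_deriv (by simp [hs])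
  · intro v hv
    have hm : ((1:ℝ), v) ∈ Q := ⟨by simp, hv.1.le, hv.2.le⟩
    have h1 : HasDerivWithinAt (f ∘ fun y : ℝ => ((1:ℝ), y)) (fderivWithin ℝ f Q (1, v) (0, 1)) (Icc 0 1) v :=
      HasFDerivWithinAt.comp_hasDerivWithinAt v (f := fun y : ℝ => ((1:ℝ), y)) (hfd _ hm) (hy 1 v).hasDerivWithinAt (fun y hy => ⟨by simp, hy⟩)
    have h2 : HasDerivWithinAt (f ∘ fun y : ℝ => ((1:ℝ), y)) 1 (Icc 0 1) v :=
      (hasDerivWithinAt_id v _).congr (fun y hy => hmarg_v y hy) (hmarg_v v ⟨hv.1.le, hv.2.le⟩)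
    exact (uniqueDiffOn_Icc zero_lt_one v ⟨hv.1.le, hv.2.le⟩).eq_deriv _ h1 h2
  · intro u hu
    have hm : (u, (0:ℝ)) ∈ Q := ⟨⟨hu.1.le, hu.2.le⟩, by simp⟩
    have h1 : HasDerivWithinAt (f ∘ fun x : ℝ => (x, (0:ℝ))) (fderivWithin ℝ f Q (u, 0) (1, 0)) (Icc 0 1) u :=
      HasFDerivWithinAt.comp_hasDerivWithinAt u (f := fun x : ℝ => (x, (0:ℝ))) (hfd _ hm) (hx u 0).hasDerivWithinAt (fun y hy => ⟨hy, by simp⟩)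
    have h2 : HasDerivWithinAt (f ∘ fun x : ℝ => (x, (0:ℝ))) 0 (Icc 0 1) u :=
      (hasDerivWithinAt_const u _ (0:ℝ)).congr (fun y hy => hground_u y hy) (hground_u u ⟨hu.1.le, hu.2.le⟩)
    exact (uniqueDiffOn_Icc zero_lt_one u ⟨hu.1.le, hu.2.le⟩).eq_deriv _ h1 h2

/-- product integrability of the truncated integrands -/
lemma prod_int (c' : ℝ × ℝ → ℝ) (hc' : ContinuousOn c' (Icc (0:ℝ) 1 ×ˢ Icc (0:ℝ) 1))
    (E1 E2 : ℝ → ℝ) (h1 : IntegrableOn E1 (Ioo 0 1)) (h2 : IntegrableOn E2 (Ioo 0 1))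
    (K : ℝ) (φ : ℝ × ℝ → ℝ)
    (hφ : Integrable φ ((volume.restrict (Ioo (0:ℝ) 1)).prod (volume.restrict (Ioo (0:ℝ) 1)))) :
    Integrable (fun z : ℝ × ℝ => if E2 z.1 + K < E1 z.2 then φ z * c' (z.2, z.1) else 0)
      ((volume.restrict (Ioo (0:ℝ) 1)).prod (volume.restrict (Ioo (0:ℝ) 1))) := by
  set μ := volume.restrict (Ioo (0:ℝ) 1)
  have hs : ContinuousOn (fun z : ℝ × ℝ => c' (z.2, z.1)) (Icc (0:ℝ) 1 ×ˢ Icc (0:ℝ) 1) :=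
    hc'.comp (by fun_prop) (fun z hz => ⟨hz.2, hz.1⟩)
  obtain ⟨M, hM⟩ := (isCompact_Icc.prod isCompact_Icc).exists_bound_of_continuousOn hs
  have hμ : μ.prod μ = (volume : Measure (ℝ × ℝ)).restrict (Ioo (0:ℝ) 1 ×ˢ Ioo (0:ℝ) 1) := by
    rw [Measure.prod_restrict, Measure.volume_eq_prod]
  have hsub : Ioo (0:ℝ) 1 ×ˢ Ioo (0:ℝ) 1 ⊆ Icc (0:ℝ) 1 ×ˢ Icc (0:ℝ) 1 :=
    prod_mono Ioo_subset_Icc_self Ioo_subset_Icc_self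
  have hQm : MeasurableSet (Ioo (0:ℝ) 1 ×ˢ Ioo (0:ℝ) 1) := measurableSet_Ioo.prod measurableSet_Ioo
  have hcm : AEStronglyMeasurable (fun z : ℝ × ℝ => c' (z.2, z.1)) (μ.prod μ) := by
    rw [hμ]; exact (hs.mono hsub).aestronglyMeasurable hQm
  have hcb : ∀ᵐ z ∂(μ.prod μ), ‖c' (z.2, z.1)‖ ≤ M := by
    rw [hμ]
    filter_upwards [ae_restrict_mem hQm] with z hz using hM z (hsub hz)
  have hset : NullMeasurableSet {z : ℝ × ℝ | E2 z.1 + K < E1 z.2} (μ.prod μ) := by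
    apply nullMeasurableSet_lt
    · exact (h2.aestronglyMeasurable.aemeasurable.comp_fst).add_const K
    · exact h1.aestronglyMeasurable.aemeasurable.comp_snd
  have hi : Integrable (fun z : ℝ × ℝ => φ z * c' (z.2, z.1)) (μ.prod μ) :=
    hφ.mul_bdd hcm hcb
  have : (fun z : ℝ × ℝ => if E2 z.1 + K < E1 z.2 then φ z * c' (z.2, z.1) else 0)
      = {z : ℝ × ℝ | E2 z.1 + K < E1 z.2}.indicator (fun z => φ z * c' (z.2, z.1)) := by
    ext z; simp [indicator]
  rw [this]
  exact hi.indicator₀ hset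

/-- Main spread option pricing identity: for a twice continuously differentiable copula
`C` with density `c = ∂²C/∂u∂v ≥ 0`, and marginal quantile functions `G₁ = F₁⁻¹`,
`G₂ = F₂⁻¹`, the undiscounted price
`∫₀¹∫₀¹ max(S₁ e^{G₁(u)} − S₂ e^{G₂(v)} − K, 0) c(u,v) du dv` decomposes into three
one-dimensional integrals involving only first partial derivatives of `C`. -/
theorem stmt_0
    (C : ℝ → ℝ → ℝ)
    (hC : ContDiffOn ℝ 2 (fun p : ℝ × ℝ => C p.1 p.2)
      (Set.Icc (0:ℝ) 1 ×ˢ Set.Icc (0:ℝ) 1))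
    (hrange : ∀ u ∈ Set.Icc (0:ℝ) 1, ∀ v ∈ Set.Icc (0:ℝ) 1, C u v ∈ Set.Icc (0:ℝ) 1)
    (hground_u : ∀ u ∈ Set.Icc (0:ℝ) 1, C u 0 = 0)
    (hground_v : ∀ v ∈ Set.Icc (0:ℝ) 1, C 0 v = 0)
    (hmarg_u : ∀ u ∈ Set.Icc (0:ℝ) 1, C u 1 = u)
    (hmarg_v : ∀ v ∈ Set.Icc (0:ℝ) 1, C 1 v = v)
    (c : ℝ → ℝ → ℝ)
    (hc : ∀ u v, c u v = deriv (fun x => deriv (fun y => C x y) v) u)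
    (hc_nonneg : ∀ u ∈ Set.Icc (0:ℝ) 1, ∀ v ∈ Set.Icc (0:ℝ) 1, 0 ≤ c u v)
    (F₁ F₂ G₁ G₂ : ℝ → ℝ)
    (hF₁c : Continuous F₁) (hF₂c : Continuous F₂)
    (hF₁m : StrictMono F₁) (hF₂m : StrictMono F₂)
    (hF₁r : Set.range F₁ = Set.Ioo 0 1) (hF₂r : Set.range F₂ = Set.Ioo 0 1)
    (hG₁F : ∀ x : ℝ, G₁ (F₁ x) = x) (hG₂F : ∀ x : ℝ, G₂ (F₂ x) = x)
    (hF₁G : ∀ w ∈ Set.Ioo (0:ℝ) 1, F₁ (G₁ w) = w)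
    (hF₂G : ∀ w ∈ Set.Ioo (0:ℝ) 1, F₂ (G₂ w) = w)
    (hint₁ : IntegrableOn (fun w => Real.exp (G₁ w)) (Set.Ioo (0:ℝ) 1))
    (hint₂ : IntegrableOn (fun w => Real.exp (G₂ w)) (Set.Ioo (0:ℝ) 1))
    (S₁ S₂ K : ℝ) (hS₁ : 0 < S₁) (hS₂ : 0 < S₂) (hK : 0 < K)
    (d₁ : ℝ → ℝ)
    (hd₁ : ∀ v, d₁ v = F₁ (Real.log ((S₂ * Real.exp (G₂ v) + K) / S₁)))
    (d₃ : ℝ) (hd₃ : d₃ = F₁ (Real.log (K / S₁)))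
    (d₂ : ℝ → ℝ)
    (hd₂ : ∀ u ∈ Set.Ioo d₃ 1,
      d₂ u = F₂ (Real.log ((S₁ * Real.exp (G₁ u) - K) / S₂))) :
    ∫ v in (0:ℝ)..1, ∫ u in (0:ℝ)..1,
        max (S₁ * Real.exp (G₁ u) - S₂ * Real.exp (G₂ v) - K) 0 * c u v
      = (∫ u in d₃..1, S₁ * Real.exp (G₁ u) * deriv (fun x => C x (d₂ u)) u)
        - ((∫ v in (0:ℝ)..1, S₂ * Real.exp (G₂ v))
            - ∫ v in (0:ℝ)..1, S₂ * Real.exp (G₂ v) * deriv (fun y => C (d₁ v) y) v)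
        - K * (1 - ∫ v in (0:ℝ)..1, deriv (fun y => C (d₁ v) y) v) := by
  obtain ⟨D1, D2, c', hD1, hD2, hc', hint, hD2one, hD1zero⟩ := calc_facts C hC hground_u hmarg_v
  set μ := volume.restrict (Ioo (0:ℝ) 1) with hμ
  set E1 : ℝ → ℝ := fun u => S₁ * Real.exp (G₁ u) with hE1
  set E2 : ℝ → ℝ := fun v => S₂ * Real.exp (G₂ v) with hE2
  have hE1i : IntegrableOn E1 (Ioo 0 1) := hint₁.const_mul S₁
  have hE2i : IntegrableOn E2 (Ioo 0 1) := hint₂.const_mul S₂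
  have hE1p : ∀ u, 0 < E1 u := fun u => by positivity
  have hE2p : ∀ u, 0 < E2 u := fun u => by positivity
  have hF1 : ∀ x, F₁ x ∈ Ioo (0:ℝ) 1 := fun x => hF₁r ▸ mem_range_self x
  have hF2 : ∀ x, F₂ x ∈ Ioo (0:ℝ) 1 := fun x => hF₂r ▸ mem_range_self x
  have hd1m : ∀ v, d₁ v ∈ Ioo (0:ℝ) 1 := fun v => hd₁ v ▸ hF1 _
  have hd3m : d₃ ∈ Ioo (0:ℝ) 1 := hd₃ ▸ hF1 _
  have hd2m : ∀ u ∈ Ioo d₃ 1, d₂ u ∈ Ioo (0:ℝ) 1 := fun u hu => hd₂ u hu ▸ hF2 _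
  -- threshold comparison for the first marginal
  have key1 : ∀ x, 0 < x → ∀ u ∈ Ioo (0:ℝ) 1, (F₁ (Real.log (x / S₁)) < u ↔ x < E1 u) := by
    intro x hx u hu
    conv_lhs => rw [← hF₁G u hu]
    rw [hF₁m.lt_iff_lt, Real.log_lt_iff_lt_exp (by positivity), div_lt_iff₀ hS₁, mul_comm]
  have key2 : ∀ x, 0 < x → ∀ v ∈ Ioo (0:ℝ) 1, (v < F₂ (Real.log (x / S₂)) ↔ E2 v < x) := by
    intro x hx v hv
    conv_lhs => rw [← hF₂G v hv]
    rw [hF₂m.lt_iff_lt, Real.lt_log_iff_exp_lt (by positivity), lt_div_iff₀ hS₂, mul_comm]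
  have iff1 : ∀ u ∈ Ioo (0:ℝ) 1, ∀ v, (E2 v + K < E1 u ↔ d₁ v < u) := by
    intro u hu v
    rw [hd₁ v]
    exact (key1 (E2 v + K) (by have := hE2p v; linarith) u hu).symm
  have iff3 : ∀ u ∈ Ioo (0:ℝ) 1, (d₃ < u ↔ K < E1 u) := by
    intro u hu
    rw [hd₃]
    exact key1 K hK u hu
  have iff2 : ∀ u ∈ Ioo d₃ 1, ∀ v ∈ Ioo (0:ℝ) 1, (E2 v + K < E1 u ↔ v < d₂ u) := by
    intro u hu v hv
    have h3 := (iff3 u ⟨hd3m.1.trans hu.1, hu.2⟩).1 hu.1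
    rw [hd₂ u hu]
    have := key2 (E1 u - K) (by linarith) v hv
    rw [this]
    constructor <;> intro h <;> linarith
  have hcc : ∀ u ∈ Ioo (0:ℝ) 1, ∀ v ∈ Ioo (0:ℝ) 1, c u v = c' (u, v) := by
    intro u hu v hv
    rw [hc, ← (hint u hu v hv).2.2.1.deriv]
    apply Filter.EventuallyEq.deriv_eq
    filter_upwards [Ioo_mem_nhds hu.1 hu.2] with x hx using (hint x hx v hv).2.1
  -- inner integrals
  have inner1 : ∀ v ∈ Ioo (0:ℝ) 1,
      ∫ u, (if E2 v + K < E1 u then c' (u, v) else 0) ∂μ = 1 - D2 (d₁ v, v) := by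
    intro v hv
    have e : ∫ u, (if E2 v + K < E1 u then c' (u, v) else 0) ∂μ
        = ∫ u in Ioo (0:ℝ) 1, (if d₁ v < u then c' (u, v) else 0) := by
      apply setIntegral_congr_fun measurableSet_Ioo
      intro u hu
      simp only [iff1 u hu v]
    have ha := hd1m v
    have hmaps : MapsTo (fun u : ℝ => (u, v)) (Icc (d₁ v) 1) (Icc (0:ℝ) 1 ×ˢ Icc (0:ℝ) 1) :=
      fun u hu => ⟨⟨ha.1.le.trans hu.1, hu.2⟩, hv.1.le, hv.2.le⟩
    rw [e, intA (fun u => c' (u, v)) _ ha]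
    refine Eq.trans ?_ (congrArg (· - D2 (d₁ v, v)) (hD2one v hv))
    apply integral_eq_sub_of_hasDerivAt_of_le ha.2.le
      (f := fun u => D2 (u, v)) (hD2.comp (by fun_prop) hmaps)
    · intro u hu
      exact (hint u ⟨ha.1.trans hu.1, hu.2⟩ v hv).2.2.1
    · apply ContinuousOn.intervalIntegrable
      rw [uIcc_of_le ha.2.le]
      exact hc'.comp (by fun_prop) hmaps
  have inner2 : ∀ u ∈ Ioo d₃ 1,
      ∫ v, (if E2 v + K < E1 u then c' (u, v) else 0) ∂μ = D1 (u, d₂ u) := by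
    intro u hu'
    have hu : u ∈ Ioo (0:ℝ) 1 := ⟨hd3m.1.trans hu'.1, hu'.2⟩
    have e : ∫ v, (if E2 v + K < E1 u then c' (u, v) else 0) ∂μ
        = ∫ v in Ioo (0:ℝ) 1, (if v < d₂ u then c' (u, v) else 0) := by
      apply setIntegral_congr_fun measurableSet_Ioo
      intro v hv
      simp only [iff2 u hu' v hv]
    have ha := hd2m u hu'
    have hmaps : MapsTo (fun v : ℝ => (u, v)) (Icc 0 (d₂ u)) (Icc (0:ℝ) 1 ×ˢ Icc (0:ℝ) 1) :=
      fun v hv => ⟨⟨hu.1.le, hu.2.le⟩, hv.1, hv.2.trans ha.2.le⟩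
    have ftc : ∫ v in (0:ℝ)..d₂ u, c' (u, v) = D1 (u, d₂ u) - D1 (u, 0) := by
      apply integral_eq_sub_of_hasDerivAt_of_le ha.1.le
        (f := fun v => D1 (u, v)) (hD1.comp (by fun_prop) hmaps)
      · intro v hv
        exact (hint u hu v ⟨hv.1, hv.2.trans ha.2⟩).2.2.2
      · apply ContinuousOn.intervalIntegrable
        rw [uIcc_of_le ha.1.le]
        exact hc'.comp (by fun_prop) hmaps
    rw [e, intB (fun v => c' (u, v)) _ ha, ftc, hD1zero u hu, sub_zero]
  have inner2' : ∀ u ∈ Ioo (0:ℝ) 1, u ≤ d₃ →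
      ∫ v, (if E2 v + K < E1 u then c' (u, v) else 0) ∂μ = 0 := by
    intro u hu hle
    have h3 : E1 u ≤ K := not_lt.1 (fun h => absurd ((iff3 u hu).2 h) (not_lt.2 hle))
    have : ∀ v, ¬ (E2 v + K < E1 u) := fun v => by have := hE2p v; linarith
    simp [this]
  -- integrability on the product
  have hP := prod_int c' hc' E1 E2 hE1i hE2i K (fun z => E1 z.2) (hE1i.comp_snd μ)
  have hR := prod_int c' hc' E1 E2 hE1i hE2i K (fun z => E2 z.1) (hE2i.comp_fst μ)
  have hT := prod_int c' hc' E1 E2 hE1i hE2i K (fun z => 1) (integrable_const _)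
  rw [← hμ] at hP hR hT
  simp only [one_mul] at hT
  have pull : ∀ (p : Prop) [Decidable p] (a b : ℝ),
      (if p then a * b else 0) = a * (if p then b else 0) := by
    intro p _ a b; split_ifs <;> simp
  have toμ : ∀ g : ℝ → ℝ, ∫ x in (0:ℝ)..1, g x = ∫ x, g x ∂μ := by
    intro g
    rw [intervalIntegral.integral_of_le zero_le_one, integral_Ioc_eq_integral_Ioo]
  -- left-hand side
  have lhs : ∫ v in (0:ℝ)..1, ∫ u in (0:ℝ)..1, max (E1 u - E2 v - K) 0 * c u v
      = ∫ z, ((if E2 z.1 + K < E1 z.2 then E1 z.2 * c' (z.2, z.1) else 0)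
        - (if E2 z.1 + K < E1 z.2 then E2 z.1 * c' (z.2, z.1) else 0)
        - K * (if E2 z.1 + K < E1 z.2 then c' (z.2, z.1) else 0)) ∂(μ.prod μ) := by
    refine Eq.trans ?_ (integral_prod _ ((hP.sub hR).sub (hT.const_mul K))).symm
    rw [toμ]
    apply setIntegral_congr_fun measurableSet_Ioo
    intro v hv
    simp only [toμ]
    apply setIntegral_congr_fun measurableSet_Ioo
    intro u hu
    simp only [hcc u hu v hv, Pi.sub_apply]
    split_ifs with h
    · rw [max_eq_left (by linarith)]; ring
    · rw [max_eq_right (by linarith)]; ring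
  have eP : ∫ z, (if E2 z.1 + K < E1 z.2 then E1 z.2 * c' (z.2, z.1) else 0) ∂(μ.prod μ)
      = ∫ u in d₃..1, E1 u * deriv (fun x => C x (d₂ u)) u := by
    rw [integral_prod_symm _ hP, ← intA _ d₃ hd3m]
    apply setIntegral_congr_fun measurableSet_Ioo
    intro u hu
    simp only [pull, MeasureTheory.integral_const_mul]
    by_cases h : d₃ < u
    · simp only [h, if_true]
      rw [inner2 u ⟨h, hu.2⟩, (hint u hu _ (hd2m u ⟨h, hu.2⟩)).1]
    · rw [inner2' u hu (not_lt.1 h)]; simp [h]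
  have hder : ∀ v ∈ Ioo (0:ℝ) 1, deriv (fun y => C (d₁ v) y) v = D2 (d₁ v, v) := fun v hv =>
    (hint _ (hd1m v) v hv).2.1
  have hTi : Integrable (fun v => 1 - D2 (d₁ v, v)) μ := by
    refine hT.integral_prod_left.congr ?_
    filter_upwards [ae_restrict_mem measurableSet_Ioo] with v hv using inner1 v hv
  have hRi : Integrable (fun v => E2 v * (1 - D2 (d₁ v, v))) μ := by
    refine hR.integral_prod_left.congr ?_
    filter_upwards [ae_restrict_mem measurableSet_Ioo] with v hv
    simp only [pull, MeasureTheory.integral_const_mul]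
    rw [inner1 v hv]
  have eR : ∫ z, (if E2 z.1 + K < E1 z.2 then E2 z.1 * c' (z.2, z.1) else 0) ∂(μ.prod μ)
      = (∫ v in (0:ℝ)..1, E2 v)
            - ∫ v in (0:ℝ)..1, E2 v * deriv (fun y => C (d₁ v) y) v := by
    have e1 : ∫ v in (0:ℝ)..1, E2 v * deriv (fun y => C (d₁ v) y) v
        = ∫ v, (E2 v - E2 v * (1 - D2 (d₁ v, v))) ∂μ := by
      rw [toμ]
      apply setIntegral_congr_fun measurableSet_Ioo
      intro v hv
      simp only [hder v hv]; ring
    rw [e1, MeasureTheory.integral_sub hE2i hRi, toμ, integral_prod _ hR, sub_sub_cancel]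
    apply setIntegral_congr_fun measurableSet_Ioo
    intro v hv
    simp only [pull, MeasureTheory.integral_const_mul]
    rw [inner1 v hv]
  have eT : ∫ z, (if E2 z.1 + K < E1 z.2 then c' (z.2, z.1) else 0) ∂(μ.prod μ)
      = 1 - ∫ v in (0:ℝ)..1, deriv (fun y => C (d₁ v) y) v := by
    have e1 : ∫ v in (0:ℝ)..1, deriv (fun y => C (d₁ v) y) v
        = ∫ v, (1 - (1 - D2 (d₁ v, v))) ∂μ := by
      rw [toμ]
      apply setIntegral_congr_fun measurableSet_Ioo
      intro v hv
      simp only [hder v hv]; ring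
    have e2 : ∫ v, (1:ℝ) ∂μ = 1 := by rw [← toμ]; simp
    rw [e1, MeasureTheory.integral_sub (integrable_const _) hTi, integral_prod _ hT, e2, sub_sub_cancel]
    apply setIntegral_congr_fun measurableSet_Ioo
    intro v hv
    exact inner1 v hv
  rw [← eP, ← eR, ← eT]
  refine lhs.trans ?_
  refine (MeasureTheory.integral_sub (hP.sub hR) (hT.const_mul K)).trans ?_
  rw [MeasureTheory.integral_const_mul]
  congr 1
  exact MeasureTheory.integral_sub hP hR
end

section
/- For θ > 0 with θ ≠ 1 and (u,v) in the open square (0,1)², the mixed second-order partial derivative of the Plackett copula equals the Plackett density: ∂²C_θ/∂u∂v(u,v) = θ·[1 + (θ−1)(u − 2uv + v)] / ([1+(θ−1)(u+v)]² − 4uvθ(θ−1))^{3/2}. -/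
open Real Set

/-- The Plackett copula for parameter `θ > 0`, `θ ≠ 1`. -/
noncomputable def plackett (θ u v : ℝ) : ℝ :=
  ((1 + (θ - 1) * (u + v)) -
      Real.sqrt ((1 + (θ - 1) * (u + v)) ^ 2 - 4 * u * v * θ * (θ - 1))) /
    (2 * (θ - 1))

lemma plackett_disc_pos (θ u v : ℝ) (hθ : 0 < θ) (hu : u ∈ Set.Ioo (0:ℝ) 1)
    (hv : v ∈ Set.Ioo (0:ℝ) 1) :
    0 < (1 + (θ - 1) * (u + v)) ^ 2 - 4 * u * v * θ * (θ - 1) := by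
  obtain ⟨hu0, hu1⟩ := hu
  obtain ⟨hv0, hv1⟩ := hv
  have h1 : 0 < θ * (u * (1 - u)) := mul_pos hθ (mul_pos hu0 (by linarith))
  have h2 : 0 < θ * (v * (1 - v)) := mul_pos hθ (mul_pos hv0 (by linarith))
  nlinarith [sq_nonneg (1 - u - v), sq_nonneg (θ * (u - v))]

lemma plackett_deriv_v (θ u v : ℝ) (hθ : 0 < θ) (hu : u ∈ Set.Ioo (0:ℝ) 1)
    (hv : v ∈ Set.Ioo (0:ℝ) 1) :
    deriv (fun y => plackett θ u y) v =
      ((θ - 1) - (2 * (1 + (θ - 1) * (u + v)) * (θ - 1) - 4 * u * θ * (θ - 1)) /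
        (2 * Real.sqrt ((1 + (θ - 1) * (u + v)) ^ 2 - 4 * u * v * θ * (θ - 1)))) /
        (2 * (θ - 1)) := by
  have hD := plackett_disc_pos θ u v hθ hu hv
  have hL : HasDerivAt (fun y : ℝ => 1 + (θ - 1) * (u + y)) (θ - 1) v := by
    simpa using (((hasDerivAt_id v).const_add u).const_mul (θ - 1)).const_add 1
  have hM : HasDerivAt (fun y : ℝ => 4 * u * y * θ * (θ - 1)) (4 * u * θ * (θ - 1)) v := by
    simpa using ((((hasDerivAt_id v).const_mul (4 * u)).mul_const θ).mul_const (θ - 1))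
  have hQ : HasDerivAt (fun y : ℝ => (1 + (θ - 1) * (u + y)) ^ 2 - 4 * u * y * θ * (θ - 1))
      (2 * (1 + (θ - 1) * (u + v)) * (θ - 1) - 4 * u * θ * (θ - 1)) v := by
    simpa using (hL.fun_pow 2).fun_sub hM
  exact ((hL.fun_sub (hQ.sqrt hD.ne')).div_const (2 * (θ - 1))).deriv

/-- On the open unit square, the mixed second-order partial derivative of the
Plackett copula equals the Plackett density. -/
theorem stmt_7 (θ : ℝ) (hθ : 0 < θ) (hθ1 : θ ≠ 1) :
    ∀ u ∈ Set.Ioo (0:ℝ) 1, ∀ v ∈ Set.Ioo (0:ℝ) 1,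
      deriv (fun x => deriv (fun y => plackett θ x y) v) u
        = θ * (1 + (θ - 1) * (u - 2 * u * v + v)) /
          ((1 + (θ - 1) * (u + v)) ^ 2 - 4 * u * v * θ * (θ - 1)) ^ ((3:ℝ)/2) := by
  intro u hu v hv
  have hD := plackett_disc_pos θ u v hθ hu hv
  have ha : θ - 1 ≠ 0 := sub_ne_zero.mpr hθ1
  have hev : (fun x => deriv (fun y => plackett θ x y) v) =ᶠ[nhds u] (fun x =>
      ((θ - 1) - (2 * (1 + (θ - 1) * (x + v)) * (θ - 1) - 4 * x * θ * (θ - 1)) /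
        (2 * Real.sqrt ((1 + (θ - 1) * (x + v)) ^ 2 - 4 * x * v * θ * (θ - 1)))) /
        (2 * (θ - 1))) := by
    filter_upwards [isOpen_Ioo.mem_nhds hu] with x hx
    exact plackett_deriv_v θ x v hθ hx hv
  rw [hev.deriv_eq]
  have hL : HasDerivAt (fun x : ℝ => 1 + (θ - 1) * (x + v)) (θ - 1) u := by
    simpa using (((hasDerivAt_id u).add_const v).const_mul (θ - 1)).const_add 1
  have hM : HasDerivAt (fun x : ℝ => 4 * x * v * θ * (θ - 1)) (4 * v * θ * (θ - 1)) u := by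
    simpa using (((((hasDerivAt_id u).const_mul 4).mul_const v).mul_const θ).mul_const (θ - 1))
  have hM' : HasDerivAt (fun x : ℝ => 4 * x * θ * (θ - 1)) (4 * θ * (θ - 1)) u := by
    simpa using ((((hasDerivAt_id u).const_mul 4).mul_const θ).mul_const (θ - 1))
  have hQ : HasDerivAt (fun x : ℝ => (1 + (θ - 1) * (x + v)) ^ 2 - 4 * x * v * θ * (θ - 1))
      (2 * (1 + (θ - 1) * (u + v)) * (θ - 1) - 4 * v * θ * (θ - 1)) u := by
    simpa using (hL.fun_pow 2).fun_sub hM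
  have hN : HasDerivAt (fun x : ℝ => 2 * (1 + (θ - 1) * (x + v)) * (θ - 1) - 4 * x * θ * (θ - 1))
      (2 * (θ - 1) * (θ - 1) - 4 * θ * (θ - 1)) u :=
    ((hL.const_mul 2).mul_const (θ - 1)).fun_sub hM'
  have hs := Real.sqrt_pos.mpr hD
  have hF := (((hN.fun_div ((hQ.sqrt hD.ne').const_mul 2) (by positivity)).const_sub
    (θ - 1)).div_const (2 * (θ - 1))).deriv
  rw [hF]
  have hpow : ((1 + (θ - 1) * (u + v)) ^ 2 - 4 * u * v * θ * (θ - 1)) ^ ((3:ℝ)/2) =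
      Real.sqrt ((1 + (θ - 1) * (u + v)) ^ 2 - 4 * u * v * θ * (θ - 1)) ^ 3 := by
    generalize (1 + (θ - 1) * (u + v)) ^ 2 - 4 * u * v * θ * (θ - 1) = D at hD ⊢
    rw [Real.sqrt_eq_rpow, ← Real.rpow_natCast, ← Real.rpow_mul hD.le]
    norm_num
  rw [hpow]
  have hsq := Real.sq_sqrt hD.le
  generalize Real.sqrt ((1 + (θ - 1) * (u + v)) ^ 2 - 4 * u * v * θ * (θ - 1)) = s at hs hsq ⊢
  have hs0 := hs.ne'
  field_simp
  rw [hsq]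
  ring
end

section
/- For every fixed (u,v) ∈ [0,1]², the Plackett copula converges to the lower Fréchet–Hoeffding bound as θ → 0⁺: lim_{θ→0⁺} ([1+(θ−1)(u+v)] − √([1+(θ−1)(u+v)]² − 4uvθ(θ−1)))/(2(θ−1)) = max(u + v − 1, 0). -/
open Real Set Filter

/-- The Plackett copula converges to the lower Fréchet–Hoeffding bound
`max(u + v − 1, 0)` as `θ → 0⁺`. -/
theorem stmt_11 (u v : ℝ) (hu : u ∈ Set.Icc (0:ℝ) 1) (hv : v ∈ Set.Icc (0:ℝ) 1) :
    Filter.Tendsto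
      (fun θ : ℝ =>
        ((1 + (θ - 1) * (u + v)) -
            Real.sqrt ((1 + (θ - 1) * (u + v)) ^ 2 - 4 * u * v * θ * (θ - 1))) /
          (2 * (θ - 1)))
      (nhdsWithin 0 (Set.Ioi (0:ℝ))) (nhds (max (u + v - 1) 0)) := by
  have hc : ContinuousAt (fun θ : ℝ =>
        ((1 + (θ - 1) * (u + v)) -
            Real.sqrt ((1 + (θ - 1) * (u + v)) ^ 2 - 4 * u * v * θ * (θ - 1))) /
          (2 * (θ - 1))) 0 := by
    apply ContinuousAt.div
    · fun_prop
    · fun_prop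
    · norm_num
  have h := hc.tendsto.mono_left (nhdsWithin_le_nhds (s := Set.Ioi (0:ℝ)))
  have e : max (u + v - 1) 0 = ((1 + ((0:ℝ) - 1) * (u + v)) -
            Real.sqrt ((1 + ((0:ℝ) - 1) * (u + v)) ^ 2 - 4 * u * v * 0 * ((0:ℝ) - 1))) /
          (2 * ((0:ℝ) - 1)) := by
    have e2 : (1 + ((0:ℝ) - 1) * (u + v)) ^ 2 - 4 * u * v * 0 * ((0:ℝ) - 1)
        = (u + v - 1) ^ 2 := by ring
    rw [e2, Real.sqrt_sq_eq_abs]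
    rcases le_total 0 (u + v - 1) with h0 | h0
    · rw [max_eq_left h0, abs_of_nonneg h0]; ring
    · rw [max_eq_right h0, abs_of_nonpos h0]; ring
  rw [e]
  exact h
end

section
/- For every fixed (u,v) ∈ [0,1]², the Plackett copula converges to the upper Fréchet–Hoeffding bound as θ → ∞: lim_{θ→∞} ([1+(θ−1)(u+v)] − √([1+(θ−1)(u+v)]² − 4uvθ(θ−1)))/(2(θ−1)) = min(u, v). -/
open Real Set Filter

/-- The Plackett copula converges to the upper Fréchet–Hoeffding bound
`min(u, v)` as `θ → ∞`. -/
theorem stmt_12 (u v : ℝ) (hu : u ∈ Set.Icc (0:ℝ) 1) (hv : v ∈ Set.Icc (0:ℝ) 1) :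
    Filter.Tendsto
      (fun θ : ℝ =>
        ((1 + (θ - 1) * (u + v)) -
            Real.sqrt ((1 + (θ - 1) * (u + v)) ^ 2 - 4 * u * v * θ * (θ - 1))) /
          (2 * (θ - 1)))
      Filter.atTop (nhds (min u v)) := by
  have ht : Tendsto (fun θ : ℝ => (θ - 1)⁻¹) atTop (nhds 0) :=
    tendsto_inv_atTop_zero.comp (tendsto_atTop_add_const_right _ (-1) tendsto_id)
  have hc : Continuous (fun t : ℝ =>
      ((t + (u + v)) - Real.sqrt ((t + (u + v)) ^ 2 - 4 * u * v * (1 + t))) / 2) := by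
    fun_prop
  have h := (hc.tendsto 0).comp ht
  have h0 : ((0 + (u + v)) - Real.sqrt ((0 + (u + v)) ^ 2 - 4 * u * v * (1 + 0))) / 2
      = min u v := by
    have e : (0 + (u + v)) ^ 2 - 4 * u * v * (1 + 0) = (u - v) ^ 2 := by ring
    rw [e, Real.sqrt_sq_eq_abs]
    rcases le_total u v with h | h
    · rw [min_eq_left h, abs_of_nonpos (by linarith)]; ring
    · rw [min_eq_right h, abs_of_nonneg (by linarith)]; ring
  rw [h0] at h
  refine h.congr' ?_
  filter_upwards [eventually_gt_atTop (1 : ℝ)] with θ hθ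
  have hp : 0 < θ - 1 := by linarith
  have e : (1 + (θ - 1) * (u + v)) ^ 2 - 4 * u * v * θ * (θ - 1)
      = (θ - 1) ^ 2 * (((θ - 1)⁻¹ + (u + v)) ^ 2 - 4 * u * v * (1 + (θ - 1)⁻¹)) := by
    field_simp
    ring
  rw [e, Real.sqrt_mul (sq_nonneg _), Real.sqrt_sq hp.le]
  simp only [Function.comp]
  generalize Real.sqrt _ = r
  field_simp
end

section
/- For θ > 0 with θ ≠ 1, Spearman's rho of the Plackett copula satisfies 12·∫₀¹∫₀¹ C_θ(u,v) du dv − 3 = (θ+1)/(θ−1) − 2θ·ln(θ)/(θ−1)², where C_θ(u,v) = ([1+(θ−1)(u+v)] − √([1+(θ−1)(u+v)]² − 4uvθ(θ−1)))/(2(θ−1)). -/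
open Real Set intervalIntegral

lemma plackett_inner (θ v : ℝ) (hθ : 0 < θ) (hθ1 : θ ≠ 1) (h0 : 0 < v) (h1 : v < 1) :
    ∫ u in (0:ℝ)..1, plackett θ u v =
      ((1 + (θ - 1) / 2 + (θ - 1) * v) - ((θ - (θ + 1) * v) * (θ - (θ - 1) * v)
        - (1 - (θ + 1) * v) * (1 + (θ - 1) * v) + 4 * θ * v * (1 - v) * Real.log θ)
          / (2 * (θ - 1))) / (2 * (θ - 1)) := by
  have ha : θ - 1 ≠ 0 := sub_ne_zero.mpr hθ1
  have hv : 0 < 1 - v := by linarith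
  have hk : 0 < 4 * θ * v * (1 - v) := by positivity
  obtain ⟨k, hkd⟩ : ∃ k, k = 4 * θ * v * (1 - v) := ⟨_, rfl⟩
  rw [← hkd] at hk ⊢
  have hS : ∀ u, (1 + (θ - 1) * (u + v)) ^ 2 - 4 * u * v * θ * (θ - 1)
      = ((θ - 1) * u + (1 - (θ + 1) * v)) ^ 2 + k := by
    intro u; rw [hkd]; ring
  have hF : ∀ u, HasDerivAt (fun u : ℝ => ((u + (θ - 1) * (u ^ 2 / 2 + u * v)) -
      (((θ - 1) * u + (1 - (θ + 1) * v)) * √(((θ - 1) * u + (1 - (θ + 1) * v)) ^ 2 + k)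
        + k * Real.log (((θ - 1) * u + (1 - (θ + 1) * v))
          + √(((θ - 1) * u + (1 - (θ + 1) * v)) ^ 2 + k))) / (2 * (θ - 1))) / (2 * (θ - 1)))
      (plackett θ u v) u := by
    intro u
    have hw : HasDerivAt (fun u : ℝ => (θ - 1) * u + (1 - (θ + 1) * v)) (θ - 1) u := by
      simpa using ((hasDerivAt_id u).const_mul (θ - 1)).add_const (1 - (θ + 1) * v)
    have hpos : 0 < ((θ - 1) * u + (1 - (θ + 1) * v)) ^ 2 + k := by positivity
    have hs := ((hw.pow 2).add_const k).sqrt hpos.ne'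
    have hsum : 0 < ((θ - 1) * u + (1 - (θ + 1) * v))
          + √(((θ - 1) * u + (1 - (θ + 1) * v)) ^ 2 + k) := by
      have : |(θ - 1) * u + (1 - (θ + 1) * v)| < √(((θ - 1) * u + (1 - (θ + 1) * v)) ^ 2 + k) := by
        rw [← Real.sqrt_sq_eq_abs]
        exact Real.sqrt_lt_sqrt (sq_nonneg _) (by linarith)
      linarith [neg_abs_le ((θ - 1) * u + (1 - (θ + 1) * v))]
    have hl := (hw.add hs).log hsum.ne'
    have hp : HasDerivAt (fun u : ℝ => u + (θ - 1) * (u ^ 2 / 2 + u * v))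
        (1 + (θ - 1) * (u + v)) u := by
      have := (hasDerivAt_id u).add (((((hasDerivAt_id u).pow 2).div_const 2).add
        ((hasDerivAt_id u).mul_const v)).const_mul (θ - 1))
      refine HasDerivAt.congr_deriv this ?_
      simp
    have := (hp.sub (((hw.mul hs).add (hl.const_mul k)).div_const (2 * (θ - 1)))).div_const
      (2 * (θ - 1))
    refine HasDerivAt.congr_deriv this (Eq.symm ?_)
    unfold plackett
    rw [hS]
    have hsq := Real.sq_sqrt hpos.le
    have hspos := Real.sqrt_pos.mpr hpos
    simp only [Pi.add_apply, Pi.pow_apply] at *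
    generalize √(((θ - 1) * u + (1 - (θ + 1) * v)) ^ 2 + k) = s at *
    generalize (θ - 1) * u + (1 - (θ + 1) * v) = w at *
    have hkk : k = s ^ 2 - w ^ 2 := by linarith
    congr 2
    rw [hkk]
    have h1 := hsum.ne'
    have h2 := hspos.ne'
    generalize θ - 1 = a at *
    push_cast
    field_simp
    ring
  have hc : Continuous fun u => plackett θ u v := by
    unfold plackett; fun_prop
  rw [integral_eq_sub_of_hasDerivAt (fun u _ => hF u) (hc.intervalIntegrable _ _)]
  have e1 : √(((θ - 1) * 1 + (1 - (θ + 1) * v)) ^ 2 + k) = θ - (θ - 1) * v := by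
    rw [show ((θ - 1) * 1 + (1 - (θ + 1) * v)) ^ 2 + k = (θ - (θ - 1) * v) ^ 2 by rw [hkd]; ring]
    exact Real.sqrt_sq (by nlinarith)
  have e0 : √(((θ - 1) * 0 + (1 - (θ + 1) * v)) ^ 2 + k) = 1 + (θ - 1) * v := by
    rw [show ((θ - 1) * 0 + (1 - (θ + 1) * v)) ^ 2 + k = (1 + (θ - 1) * v) ^ 2 by rw [hkd]; ring]
    exact Real.sqrt_sq (by nlinarith)
  rw [e1, e0]
  have l1 : Real.log ((θ - 1) * 1 + (1 - (θ + 1) * v) + (θ - (θ - 1) * v))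
      = Real.log θ + Real.log ((θ - 1) * 0 + (1 - (θ + 1) * v) + (1 + (θ - 1) * v)) := by
    rw [← Real.log_mul hθ.ne' (by nlinarith)]
    congr 1; ring
  rw [l1]
  ring

/-- Closed form of Spearman's rho for the Plackett copula:
`12 ∫₀¹∫₀¹ C_θ(u,v) du dv − 3 = (θ+1)/(θ−1) − 2θ ln θ/(θ−1)²`. -/
theorem stmt_14 (θ : ℝ) (hθ : 0 < θ) (hθ1 : θ ≠ 1) :
    12 * (∫ v in (0:ℝ)..1, ∫ u in (0:ℝ)..1, plackett θ u v) - 3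
      = (θ + 1) / (θ - 1) - 2 * θ * Real.log θ / (θ - 1) ^ 2 := by
  have ha : θ - 1 ≠ 0 := sub_ne_zero.mpr hθ1
  have key : (∫ v in (0:ℝ)..1, ∫ u in (0:ℝ)..1, plackett θ u v) = ∫ v in (0:ℝ)..1,
      (((1 + (θ - 1) / 2) - (θ ^ 2 - 1) / (2 * (θ - 1))) / (2 * (θ - 1))
        + v * (((θ - 1) - (2 - 2 * θ ^ 2 + 4 * θ * Real.log θ) / (2 * (θ - 1))) / (2 * (θ - 1)))
        + v ^ 2 * ((-(2 * (θ ^ 2 - 1) - 4 * θ * Real.log θ) / (2 * (θ - 1))) / (2 * (θ - 1)))) := by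
    refine integral_congr_Ioo_of_le zero_le_one fun v hv => ?_
    rw [plackett_inner θ v hθ hθ1 hv.1 hv.2]
    ring
  rw [key, intervalIntegral.integral_add (Continuous.intervalIntegrable (by fun_prop) _ _)
    (Continuous.intervalIntegrable (by fun_prop) _ _),
    intervalIntegral.integral_add (Continuous.intervalIntegrable (by fun_prop) _ _)
    (Continuous.intervalIntegrable (by fun_prop) _ _), intervalIntegral.integral_mul_const,
    intervalIntegral.integral_mul_const, integral_id, integral_pow, intervalIntegral.integral_const]
  simp only [smul_eq_mul]
  push_cast
  field_simp
  ring
end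

section
/- Let Z be a standard normal random variable, let r, λ, ω, α, β, γ, u, A₊, B₊ ∈ ℝ and h > 0, S > 0, with 2αB₊ < 1. Define the one-step Heston–Nandi GARCH(1,1) update S' = S·exp(r + λh + √h·Z) and h' = ω + βh + α(Z − γ√h)². Then E[(S')^u · exp(A₊ + B₊·h')] = S^u · exp(A + B·h), where A = A₊ + u·r + B₊·ω − (1/2)·ln(1 − 2αB₊) and B = u(λ+γ) − γ²/2 + β·B₊ + (1/2)·(u − γ)²/(1 − 2αB₊). -/
open Real MeasureTheory ProbabilityTheory

/-- One-step backward recursion for the log-linear conditional moment generating function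
of the Heston–Nandi affine GARCH(1,1) model: with `S' = S exp(r + λh + √h Z)` and
`h' = ω + βh + α(Z − γ√h)²`, one has `E[(S')^u exp(A₊ + B₊ h')] = S^u exp(A + B h)` where
`A = A₊ + u r + B₊ ω − (1/2) ln(1 − 2αB₊)` and
`B = u(λ+γ) − γ²/2 + β B₊ + (1/2)(u − γ)²/(1 − 2αB₊)`. -/
theorem stmt_16 {Ω : Type*} [MeasurableSpace Ω] (μ : Measure Ω) [IsProbabilityMeasure μ]
    (Z : Ω → ℝ) (hZmeas : Measurable Z)
    (hZ : Measure.map Z μ = gaussianReal 0 1)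
    (r lam ω α β γ u Aplus Bplus h S : ℝ) (hh : 0 < h) (hS : 0 < S)
    (hαB : 2 * α * Bplus < 1) :
    ∫ x, (S * Real.exp (r + lam * h + Real.sqrt h * Z x)) ^ u *
        Real.exp (Aplus + Bplus * (ω + β * h + α * (Z x - γ * Real.sqrt h) ^ 2)) ∂μ
      = S ^ u *
        Real.exp ((Aplus + u * r + Bplus * ω - (1/2) * Real.log (1 - 2 * α * Bplus)) +
          (u * (lam + γ) - γ ^ 2 / 2 + β * Bplus +
            (1/2) * (u - γ) ^ 2 / (1 - 2 * α * Bplus)) * h) := by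
  have hD : 0 < 1 - 2 * α * Bplus := by linarith
  have hmeas : Measurable (fun z : ℝ => (S * Real.exp (r + lam * h + Real.sqrt h * z)) ^ u *
        Real.exp (Aplus + Bplus * (ω + β * h + α * (z - γ * Real.sqrt h) ^ 2))) := by
    fun_prop
  have h1 := integral_map (μ := μ) hZmeas.aemeasurable
    (hmeas.aestronglyMeasurable (μ := Measure.map Z μ))
  rw [← h1, hZ, integral_gaussianReal_eq_integral_smul (by norm_num)]
  set D := 1 - 2 * α * Bplus with hDdef
  obtain ⟨q, hq0, hq⟩ : ∃ q : ℝ, 0 < q ∧ q ^ 2 = h :=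
    ⟨Real.sqrt h, Real.sqrt_pos.2 hh, Real.sq_sqrt hh.le⟩
  have hsq : Real.sqrt h = q := by rw [← hq, Real.sqrt_sq hq0.le]
  set m := (u - γ + D * γ) * q / D with hm
  set E := Aplus + u * r + Bplus * ω + (u * (lam + γ) - γ ^ 2 / 2 + β * Bplus +
            (1/2) * (u - γ) ^ 2 / D) * h with hE
  have key : ∀ x : ℝ, gaussianPDFReal 0 1 x • ((S * Real.exp (r + lam * h + Real.sqrt h * x)) ^ u *
        Real.exp (Aplus + Bplus * (ω + β * h + α * (x - γ * Real.sqrt h) ^ 2)))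
      = ((√(2 * π))⁻¹ * S ^ u * Real.exp E) * Real.exp (-(D / 2) * (x - m) ^ 2) := by
    intro x
    rw [hsq, Real.mul_rpow hS.le (Real.exp_pos _).le, ← Real.exp_mul]
    simp only [gaussianPDFReal, smul_eq_mul, NNReal.coe_one, mul_one, sub_zero]
    have e : -x ^ 2 / 2 + ((r + lam * h + q * x) * u +
        (Aplus + Bplus * (ω + β * h + α * (x - γ * q) ^ 2))) = E + -(D / 2) * (x - m) ^ 2 := by
      have hk : α * Bplus = (1 - D) / 2 := by rw [hDdef]; ring
      have : Bplus * (ω + β * h + α * (x - γ * q) ^ 2)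
        = Bplus * (ω + β * h) + (1 - D) / 2 * (x - γ * q) ^ 2 := by rw [← hk]; ring
      rw [this, hE, hm, ← hq]
      clear_value D
      field_simp
      ring
    have e' := congrArg Real.exp e
    simp only [Real.exp_add _ _] at e' ⊢
    linear_combination ((√(2 * π))⁻¹ * S ^ u) * e'
  simp_rw [key]
  rw [integral_const_mul, integral_sub_right_eq_self (fun x : ℝ => Real.exp (-(D / 2) * x ^ 2)) m,
    integral_gaussian]
  have e2 : Aplus + u * r + Bplus * ω - 1 / 2 * Real.log D + (u * (lam + γ) - γ ^ 2 / 2 + β * Bplus +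
            (1/2) * (u - γ) ^ 2 / D) * h = E + -(Real.log D / 2) := by rw [hE]; ring
  rw [e2, Real.exp_add E, Real.exp_neg, ← Real.log_sqrt hD.le, Real.exp_log (Real.sqrt_pos.2 hD)]
  have e3 : π / (D / 2) = 2 * π / D := by field_simp
  rw [e3, Real.sqrt_div (by positivity)]
  have : √(2 * π) ≠ 0 := by positivity
  have : √D ≠ 0 := (Real.sqrt_pos.2 hD).ne'
  field_simp
end
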